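/- Let A : ℝ^n → ℝ^p be a linear mapping and let Θ ⊆ ℝ^p be a nearly convex set. If A⁻¹(ri Θ) ≠ ∅, then ri(A⁻¹(Θ)) = A⁻¹(ri Θ). -/

import Mathlib

/-!
A relative interior point can be prolonged away from any point of the affine hull: if `x ∈ ri S`
and `y ∈ aff S`, then `x` lies in an open segment from `y` to a point of `S`. In the other
direction, if `Θ` is nearly convex, an open segment from a point of `ri Θ` to a point of `cl Θ`
stays in `ri Θ`: this reduces to a convex set with the same relative interior as `Θ`, and there,
identifying the affine hull with a vector space, to the corresponding fact about interiors.

For `x ∈ ri (A⁻¹ Θ)` and `x₀ ∈ A⁻¹ (ri Θ)`, prolong from `x₀` through `x` to some `z ∈ A⁻¹ Θ`; then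
`A x` lies in the open segment from `A x₀` to `A z`, hence in `ri Θ`. The inclusion
`A⁻¹ (ri Θ) ⊆ ri (A⁻¹ Θ)` is continuity of `A`, which maps `aff (A⁻¹ Θ)` into `aff Θ`.
-/

open Set Metric

noncomputable section

/-- A set is *nearly convex* if it lies between a convex set and its closure. -/
def NearlyConvex {E : Type*} [NormedAddCommGroup E] [NormedSpace ℝ E] (s : Set E) : Prop :=
  ∃ C : Set E, Convex ℝ C ∧ C ⊆ s ∧ s ⊆ closure C

/-- The *relative interior* of a set: points `a ∈ s` admitting `δ > 0` with
`B(a,δ) ∩ aff s ⊆ s`. -/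
def ri {E : Type*} [NormedAddCommGroup E] [NormedSpace ℝ E] (s : Set E) : Set E :=
  {a | a ∈ s ∧ ∃ δ > 0, Metric.ball a δ ∩ (affineSpan ℝ s : Set E) ⊆ s}

open scoped Topology

section AffineSubspace

lemma exists_affineIsometry_range_eq {𝕜 V P : Type*} [NormedField 𝕜] [SeminormedAddCommGroup V]
    [NormedSpace 𝕜 V] [PseudoMetricSpace P] [NormedAddTorsor V P] {L : AffineSubspace 𝕜 P}
    (hL : (L : Set P).Nonempty) :
    ∃ φ : L.direction →ᵃⁱ[𝕜] P, range φ = L := by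
  obtain ⟨p, hp⟩ := hL
  have : Nonempty L := ⟨⟨p, hp⟩⟩
  refine ⟨L.subtypeₐᵢ.comp (AffineIsometryEquiv.vaddConst 𝕜 (⟨p, hp⟩ : L)).toAffineIsometry, ?_⟩
  rw [AffineIsometry.coe_comp, AffineIsometryEquiv.coe_toAffineIsometry, EquivLike.range_comp]
  simp

variable {𝕜 V P : Type*} [NontriviallyNormedField 𝕜] [CompleteSpace 𝕜] [NormedAddCommGroup V]
  [NormedSpace 𝕜 V] [FiniteDimensional 𝕜 V] [MetricSpace P] [NormedAddTorsor V P]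

variable (𝕜) in
lemma closure_subset_affineSpan (s : Set P) : closure s ⊆ affineSpan 𝕜 s :=
  intrinsicClosure_eq_closure 𝕜 s ▸ intrinsicClosure_subset_affineSpan

lemma affineSpan_eq_of_subset_closure {s t : Set P} (hst : s ⊆ t) (hts : t ⊆ closure s) :
    affineSpan 𝕜 t = affineSpan 𝕜 s :=
  (affineSpan_le.2 (hts.trans (closure_subset_affineSpan 𝕜 s))).antisymm (affineSpan_mono 𝕜 hst)

end AffineSubspace

section RelativeInterior

variable {E F : Type*} [NormedAddCommGroup E] [NormedSpace ℝ E]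
  [NormedAddCommGroup F] [NormedSpace ℝ F] {s t C : Set E} {x y : E}

lemma mem_ri_iff_mem_nhdsWithin : x ∈ ri s ↔ x ∈ s ∧ s ∈ 𝓝[affineSpan ℝ s] x :=
  and_congr_right fun _ ↦ mem_nhdsWithin_iff.symm

lemma ri_subset : ri s ⊆ s := fun _ hx ↦ hx.1

lemma ri_eq_intrinsicInterior (s : Set E) : ri s = intrinsicInterior ℝ s := by
  ext x
  rw [mem_ri_iff_mem_nhdsWithin, mem_intrinsicInterior]
  constructor
  · rintro ⟨hxs, hx⟩
    exact ⟨⟨x, subset_affineSpan ℝ s hxs⟩,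
      mem_interior_iff_mem_nhds.2 (preimage_coe_mem_nhds_subtype.2 hx), rfl⟩
  · rintro ⟨y, hy, rfl⟩
    have hys : s ∈ 𝓝[affineSpan ℝ s] (y : E) :=
      preimage_coe_mem_nhds_subtype.1 (mem_interior_iff_mem_nhds.1 hy)
    exact ⟨mem_of_mem_nhdsWithin y.2 hys, hys⟩

lemma ri_subset_ri_of_affineSpan_eq (hst : s ⊆ t) (h : affineSpan ℝ t = affineSpan ℝ s) :
    ri s ⊆ ri t := by
  intro x hx
  rw [mem_ri_iff_mem_nhdsWithin] at hx ⊢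
  rw [h]
  exact ⟨hst hx.1, Filter.mem_of_superset hx.2 hst⟩

lemma preimage_ri_subset_ri_preimage (A : E →ᴬ[ℝ] F) (t : Set F) : A ⁻¹' ri t ⊆ ri (A ⁻¹' t) := by
  intro x hx
  rw [mem_preimage, mem_ri_iff_mem_nhdsWithin] at hx
  have hspan : affineSpan ℝ (A ⁻¹' t) ≤ (affineSpan ℝ t).comap (A : E →ᵃ[ℝ] F) :=
    affineSpan_le.2 fun _ hz ↦ subset_affineSpan ℝ t hz
  have hA : MapsTo A (affineSpan ℝ (A ⁻¹' t)) (affineSpan ℝ t) := fun _ hz ↦ hspan hz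
  exact mem_ri_iff_mem_nhdsWithin.2
    ⟨hx.1, A.continuous.continuousWithinAt.tendsto_nhdsWithin hA hx.2⟩

lemma exists_mem_openSegment_of_mem_ri (hx : x ∈ ri s) (hy : y ∈ affineSpan ℝ s) :
    ∃ z ∈ s, x ∈ openSegment ℝ y z := by
  rw [mem_ri_iff_mem_nhdsWithin] at hx
  have hline : Filter.Tendsto (AffineMap.lineMap y x) (𝓝 (1 : ℝ)) (𝓝[affineSpan ℝ s] x) := by
    refine tendsto_nhdsWithin_iff.2 ⟨?_, .of_forall fun r ↦
      AffineMap.lineMap_mem r hy (subset_affineSpan ℝ s hx.1)⟩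
    simpa using (AffineMap.lineMap_continuous (R := ℝ) (p := y) (q := x)).tendsto 1
  obtain ⟨r, hr, hrs⟩ : ∃ r > 1, AffineMap.lineMap y x r ∈ s :=
    Filter.Eventually.exists_gt (hline.eventually_mem hx.2)
  have hr₀ : 0 < r := one_pos.trans hr
  refine ⟨AffineMap.lineMap y x r, hrs, ?_⟩
  rw [openSegment_eq_image_lineMap]
  refine ⟨r⁻¹, ⟨inv_pos.2 hr₀, inv_lt_one_of_one_lt₀ hr⟩, ?_⟩
  rw [AffineMap.lineMap_lineMap_right, inv_mul_cancel₀ hr₀.ne', AffineMap.lineMap_apply_one]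

lemma preimage_ri_eq_interior_preimage {V : Type*} [SeminormedAddCommGroup V] [NormedSpace ℝ V]
    (φ : V →ᵃⁱ[ℝ] E) (hφ : range φ = affineSpan ℝ s) : φ ⁻¹' ri s = interior (φ ⁻¹' s) := by
  ext v
  rw [mem_preimage, mem_ri_iff_mem_nhdsWithin, mem_interior_iff_mem_nhds, ← hφ,
    ← φ.isometry.isUniformInducing.isInducing.map_nhds_eq, Filter.mem_map]
  exact and_iff_right_of_imp mem_of_mem_nhds

lemma openSegment_ri_closure_subset_ri_of_convex (hC : Convex ℝ C) (hx : x ∈ ri C)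
    (hy : y ∈ closure C) (hyC : y ∈ affineSpan ℝ C) : openSegment ℝ x y ⊆ ri C := by
  obtain ⟨φ, hφ⟩ := exists_affineIsometry_range_eq (L := affineSpan ℝ C) ⟨y, hyC⟩
  have hCφ : C ⊆ range φ := hφ ▸ subset_affineSpan ℝ C
  obtain ⟨u, rfl⟩ := hCφ (ri_subset hx)
  obtain ⟨v, rfl⟩ : y ∈ range φ := hφ ▸ hyC
  have hu : u ∈ interior (φ ⁻¹' C) := preimage_ri_eq_interior_preimage φ hφ ▸ hx
  have hv : v ∈ closure (φ ⁻¹' C) := by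
    rwa [φ.isometry.isUniformInducing.isInducing.closure_eq_preimage_closure_image,
      image_preimage_eq_of_subset hCφ]
  have hseg :=
    (hC.affine_preimage φ.toAffineMap).openSegment_interior_closure_subset_interior hu hv
  rw [← φ.coe_toAffineMap, ← image_openSegment, image_subset_iff]
  exact hseg.trans (preimage_ri_eq_interior_preimage φ hφ).superset

section FiniteDimensional

variable [FiniteDimensional ℝ E]

lemma ri_nonempty_of_convex (hC : Convex ℝ C) (hne : C.Nonempty) : (ri C).Nonempty :=
  ri_eq_intrinsicInterior C ▸ hne.intrinsicInterior hC

lemma ri_eq_ri_of_subset_closure (hC : Convex ℝ C) (hCs : C ⊆ s) (hsC : s ⊆ closure C) :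
    ri s = ri C := by
  have hspan : affineSpan ℝ s = affineSpan ℝ C := affineSpan_eq_of_subset_closure hCs hsC
  refine Subset.antisymm (fun x hx ↦ ?_) (ri_subset_ri_of_affineSpan_eq hCs hspan)
  obtain ⟨c, hc⟩ := ri_nonempty_of_convex hC (closure_nonempty_iff.1 ⟨x, hsC hx.1⟩)
  obtain ⟨z, hzs, hxz⟩ :=
    exists_mem_openSegment_of_mem_ri hx (subset_affineSpan ℝ s (hCs (ri_subset hc)))
  exact openSegment_ri_closure_subset_ri_of_convex hC hc (hsC hzs)
    (closure_subset_affineSpan ℝ C (hsC hzs)) hxz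

lemma NearlyConvex.openSegment_ri_closure_subset_ri (hs : NearlyConvex s) (hx : x ∈ ri s)
    (hy : y ∈ closure s) : openSegment ℝ x y ⊆ ri s := by
  obtain ⟨C, hC, hCs, hsC⟩ := hs
  rw [ri_eq_ri_of_subset_closure hC hCs hsC] at hx ⊢
  have hyC : y ∈ closure C := closure_minimal hsC isClosed_closure hy
  exact openSegment_ri_closure_subset_ri_of_convex hC hx hyC (closure_subset_affineSpan ℝ C hyC)

end FiniteDimensional

theorem ri_linear_preimage_general [FiniteDimensional ℝ F] (A : E →ᴬ[ℝ] F) {Θ : Set F}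
    (hΘ : NearlyConvex Θ) (hne : (A ⁻¹' ri Θ).Nonempty) : ri (A ⁻¹' Θ) = A ⁻¹' ri Θ := by
  obtain ⟨x₀, hx₀⟩ := hne
  refine Subset.antisymm (fun x hx ↦ ?_) (preimage_ri_subset_ri_preimage A Θ)
  obtain ⟨z, hz, hxz⟩ : ∃ z ∈ A ⁻¹' Θ, x ∈ openSegment ℝ x₀ z :=
    exists_mem_openSegment_of_mem_ri hx (subset_affineSpan ℝ _ (ri_subset (s := Θ) hx₀))
  have hAx : A x ∈ openSegment ℝ (A x₀) (A z) :=
    image_openSegment ℝ (A : E →ᵃ[ℝ] F) x₀ z ▸ mem_image_of_mem A hxz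
  exact hΘ.openSegment_ri_closure_subset_ri hx₀ (subset_closure hz) hAx

end RelativeInterior

theorem ri_linear_preimage (n p : ℕ)
    (A : EuclideanSpace ℝ (Fin n) →ₗ[ℝ] EuclideanSpace ℝ (Fin p))
    (Θ : Set (EuclideanSpace ℝ (Fin p))) (hΘ : NearlyConvex Θ)
    (hne : (⇑A ⁻¹' ri Θ).Nonempty) :
    ri (⇑A ⁻¹' Θ) = ⇑A ⁻¹' ri Θ :=
  ri_linear_preimage_general A.toContinuousLinearMap.toContinuousAffineMap hΘ hne
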